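/- arXiv:1709.02873 — 7 statements merged into one kernel-verified Lean document; each statement's English description precedes it below -/
import Mathlib

section
/- Let m be a positive integer and let ζ = 1/√(m+1) + i·√(m/(m+1)). Then ζ is a root of unity if and only if m = 1 or m = 3. -/
/-!
If `ζ` is a root of unity, then `ζ` and `ζ⁻¹ = conj ζ` are algebraic integers, hence so is
`(ζ + ζ⁻¹) ^ 2 = (2 Re ζ) ^ 2 = 4 / (m + 1)`. A rational algebraic integer is an integer, so
`m + 1 ∣ 4`, leaving `m = 1` or `m = 3`. Conversely `ζ ^ 8 = 1` for `m = 1` and `ζ ^ 6 = 1` for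
`m = 3`.
-/

/-- Let `m` be a positive integer and let
`ζ = 1/√(m+1) + i·√(m/(m+1))`. Then `ζ` is a root of unity iff `m = 1` or `m = 3`. -/
theorem stmt_0 (m : ℕ) (hm : 0 < m) (ζ : ℂ)
    (hζ : ζ = (↑((Real.sqrt ((m : ℝ) + 1))⁻¹) : ℂ)
        + Complex.I * ↑(Real.sqrt ((m : ℝ) / ((m : ℝ) + 1)))) :
    (∃ k : ℕ, 0 < k ∧ ζ ^ k = 1) ↔ (m = 1 ∨ m = 3) := by
  have ha0 : 0 < (Real.sqrt ((m : ℝ) + 1))⁻¹ := by positivity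
  have ha : (Real.sqrt ((m : ℝ) + 1))⁻¹ ^ 2 = 1 / ((m : ℝ) + 1) := by
    rw [inv_pow, Real.sq_sqrt (by positivity), one_div]
  have hb : Real.sqrt ((m : ℝ) / ((m : ℝ) + 1)) ^ 2 = (m : ℝ) / ((m : ℝ) + 1) :=
    Real.sq_sqrt (by positivity)
  generalize (Real.sqrt ((m : ℝ) + 1))⁻¹ = a at *
  generalize Real.sqrt ((m : ℝ) / ((m : ℝ) + 1)) = b at *
  have hab : a ^ 2 + b ^ 2 = 1 := by
    rw [ha, hb]
    field_simp
    ring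
  have habC : (a : ℂ) ^ 2 + (b : ℂ) ^ 2 = 1 := by exact_mod_cast hab
  have hI : Complex.I ^ 2 = -1 := Complex.I_sq
  constructor
  · rintro ⟨k, hk, hk1⟩
    obtain ⟨w, hw⟩ : ∃ w : ℂ, w = a - Complex.I * b := ⟨_, rfl⟩
    have hζw : ζ * w = 1 := by
      rw [hζ, hw]
      linear_combination habC - (b : ℂ) ^ 2 * hI
    have hw1 : w ^ k = 1 := by
      have h := congrArg (· ^ k) hζw
      simpa [mul_pow, hk1] using h
    have hζi : IsIntegral ℤ ζ := .of_pow hk (hk1 ▸ isIntegral_one)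
    have hwi : IsIntegral ℤ w := .of_pow hk (hw1 ▸ isIntegral_one)
    have hsq : (ζ + w) ^ 2 = algebraMap ℚ ℂ (4 / ((m : ℚ) + 1)) := by
      have haC : (a : ℂ) ^ 2 = 1 / ((m : ℂ) + 1) := by
        simpa using congrArg Complex.ofReal ha
      have hq : algebraMap ℚ ℂ (4 / ((m : ℚ) + 1)) = 4 * (1 / ((m : ℂ) + 1)) := by
        simp [div_eq_mul_inv]
      rw [hq, ← haC, hζ, hw]
      ring
    have hint : IsIntegral ℤ (algebraMap ℚ ℂ (4 / ((m : ℚ) + 1))) := hsq ▸ (hζi.add hwi).pow 2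
    rw [isIntegral_algebraMap_iff (algebraMap ℚ ℂ).injective] at hint
    obtain ⟨n, hn⟩ := IsIntegrallyClosed.isIntegral_iff.mp hint
    have hn' : (n : ℚ) = 4 / ((m : ℚ) + 1) := by simpa using hn
    rw [eq_div_iff (by positivity)] at hn'
    have hn4 : ((m + 1 : ℕ) : ℤ) * n = 4 := by
      push_cast
      rw [mul_comm]
      exact_mod_cast hn'
    have hdvd : m + 1 ∣ 4 := Int.natCast_dvd_natCast.mp ⟨n, hn4.symm⟩
    have hle : m ≤ 3 := by
      have := Nat.le_of_dvd (by norm_num) hdvd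
      omega
    interval_cases m <;> simp_all
  · rintro (rfl | rfl)
    · refine ⟨8, by norm_num, ?_⟩
      have haC : (a : ℂ) ^ 2 = 1 / 2 := by
        have h : a ^ 2 = 1 / 2 := by rw [ha]; norm_num
        simpa using congrArg Complex.ofReal h
      have hbC : (b : ℂ) ^ 2 = 1 / 2 := by linear_combination habC - haC
      have h2 : ζ ^ 2 = 2 * a * b * Complex.I := by
        rw [hζ]
        linear_combination haC - hbC + (b : ℂ) ^ 2 * hI
      have h4 : ζ ^ 4 = -1 := by
        calc ζ ^ 4 = (ζ ^ 2) ^ 2 := by ring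
          _ = 4 * (a : ℂ) ^ 2 * (b : ℂ) ^ 2 * Complex.I ^ 2 := by rw [h2]; ring
          _ = -1 := by rw [haC, hbC, hI]; norm_num
      calc ζ ^ 8 = (ζ ^ 4) ^ 2 := by ring
        _ = 1 := by rw [h4]; norm_num
    · refine ⟨6, by norm_num, ?_⟩
      have haR : a = 1 / 2 := by
        have h : a ^ 2 = 1 / 4 := by rw [ha]; norm_num
        nlinarith
      have haC : (a : ℂ) = 1 / 2 := by rw [haR]; norm_num
      -- `ζ` is a root of `X ^ 2 - 2 a X + 1 = X ^ 2 - X + 1`, the sixth cyclotomic polynomial.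
      have h2 : ζ ^ 2 - ζ + 1 = 0 := by
        rw [haC] at habC hζ
        rw [hζ]
        linear_combination (b : ℂ) ^ 2 * hI - habC
      linear_combination (ζ + 1) * (ζ ^ 3 - 1) * h2
end

section
/- Let m be a positive integer, let A and B be n×n real matrices with all entries ±1, and set H = (1/√(m+1))·A + i·√(m/(m+1))·B. If H H* = n I_n, then A B^T = B A^T and A A^T + m·B B^T = (m+1)·n·I_n. -/
/-! With `a = 1/√(m+1)` and `b = √(m/(m+1))`, the real part of `H Hᴴ` is `a² A Aᵀ + b² B Bᵀ` and its
imaginary part is `a b (B Aᵀ - A Bᵀ)`. As `n I` is real and `a b ≠ 0`, the imaginary part gives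
amicability; as `a² = 1/(m+1)` and `b² = m/(m+1)`, the real part multiplied by `m+1` gives the second
identity. -/

open Matrix

/-- Real and imaginary parts of `H Hᴴ` for `H = a A + i b B` with all of `a, b, A, B` real. -/
theorem mul_conjTranspose_apply_re_im {n : ℕ} (a b : ℝ) (A B : Matrix (Fin n) (Fin n) ℝ)
    (H : Matrix (Fin n) (Fin n) ℂ)
    (hH : H = (a : ℂ) • A.map Complex.ofReal + (Complex.I * (b : ℂ)) • B.map Complex.ofReal)
    (i j : Fin n) :
    ((H * Hᴴ) i j).re = a ^ 2 * (A * Aᵀ) i j + b ^ 2 * (B * Bᵀ) i j ∧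
      ((H * Hᴴ) i j).im = a * b * ((B * Aᵀ) i j - (A * Bᵀ) i j) := by
  subst hH
  simp only [Matrix.mul_apply, Matrix.conjTranspose_apply, Matrix.transpose_apply, Complex.re_sum,
    Complex.im_sum, Finset.mul_sum, ← Finset.sum_add_distrib, ← Finset.sum_sub_distrib]
  constructor <;> refine Finset.sum_congr rfl fun k _ => ?_ <;> simp <;> ring

/-- Let `m` be a positive integer, `A, B` be `n × n` real `(±1)`-matrices
and set `H = (1/√(m+1))·A + i·√(m/(m+1))·B`. If `H Hᴴ = n I`, then `A Bᵀ = B Aᵀ` and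
`A Aᵀ + m·B Bᵀ = (m+1)·n·I`. -/
theorem stmt_2 (m n : ℕ) (hm : 0 < m)
    (A B : Matrix (Fin n) (Fin n) ℝ)
    (hA : ∀ i j, A i j = 1 ∨ A i j = -1)
    (hB : ∀ i j, B i j = 1 ∨ B i j = -1)
    (H : Matrix (Fin n) (Fin n) ℂ)
    (hH : H = (↑((Real.sqrt ((m : ℝ) + 1))⁻¹) : ℂ) • A.map Complex.ofReal
        + (Complex.I * ↑(Real.sqrt ((m : ℝ) / ((m : ℝ) + 1)))) • B.map Complex.ofReal)
    (hHad : H * Hᴴ = (n : ℂ) • (1 : Matrix (Fin n) (Fin n) ℂ)) :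
    A * Bᵀ = B * Aᵀ ∧
      A * Aᵀ + (m : ℝ) • (B * Bᵀ) =
        (((m : ℝ) + 1) * (n : ℝ)) • (1 : Matrix (Fin n) (Fin n) ℝ) := by
  have hm0 : (0 : ℝ) < m := by exact_mod_cast hm
  have hm1 : (0 : ℝ) < (m : ℝ) + 1 := by positivity
  set a := (Real.sqrt ((m : ℝ) + 1))⁻¹ with ha
  set b := Real.sqrt ((m : ℝ) / ((m : ℝ) + 1)) with hb
  have hab : a * b ≠ 0 := by positivity
  have ha2 : ((m : ℝ) + 1) * a ^ 2 = 1 := by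
    rw [ha, inv_pow, Real.sq_sqrt hm1.le, mul_inv_cancel₀ hm1.ne']
  have hb2 : ((m : ℝ) + 1) * b ^ 2 = m := by
    rw [hb, Real.sq_sqrt (by positivity), mul_div_cancel₀ _ hm1.ne']
  have key := mul_conjTranspose_apply_re_im a b A B H hH
  rw [hHad] at key
  have hre : ∀ i j, (((n : ℂ) • (1 : Matrix (Fin n) (Fin n) ℂ)) i j) =
      (((n : ℝ) * (1 : Matrix (Fin n) (Fin n) ℝ) i j : ℝ) : ℂ) := by
    intro i j
    by_cases h : i = j <;> simp [Matrix.one_apply, h]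
  simp only [hre, Complex.ofReal_re, Complex.ofReal_im] at key
  constructor
  · ext i j
    have h := (mul_eq_zero.mp (key i j).2.symm).resolve_left hab
    linarith
  · ext i j
    have h := (key i j).1
    simp only [Matrix.add_apply, Matrix.smul_apply, smul_eq_mul]
    linear_combination (-((m : ℝ) + 1)) * h - (A * Aᵀ) i j * ha2 - (B * Bᵀ) i j * hb2
end

section
/- Let Q be a skew symmetric core of order q and define 𝒥_m and 𝒜_m recursively as above. Then for every integer m ≥ 0, the matrices 𝒥_m and 𝒜_m are amicable, i.e. 𝒥_m 𝒜_m^T = 𝒜_m 𝒥_m^T. -/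
open Matrix Kronecker

/-- The `q × q` all-ones matrix. -/
def Jmat (q : ℕ) : Matrix (Fin q) (Fin q) ℝ := Matrix.of fun _ _ => 1

/-- `Q` is a skew symmetric core of order `q`: a `q × q` real matrix with zero
diagonal and off-diagonal entries `±1` such that `Qᵀ = -Q`, `Q J = J Q = 0` and
`Q Qᵀ = q I - J`. -/
def IsSkewCore (q : ℕ) (Q : Matrix (Fin q) (Fin q) ℝ) : Prop :=
  (∀ i, Q i i = 0) ∧
  (∀ i j, i ≠ j → Q i j = 1 ∨ Q i j = -1) ∧
  Qᵀ = -Q ∧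
  Q * Jmat q = 0 ∧
  Jmat q * Q = 0 ∧
  Q * Qᵀ = (q : ℝ) • (1 : Matrix (Fin q) (Fin q) ℝ) - Jmat q

/-- Index identification `Fin q × Fin (q ^ m) ≃ Fin (q ^ (m + 1))`. -/
def finPowEquiv (q m : ℕ) : Fin q × Fin (q ^ m) ≃ Fin (q ^ (m + 1)) :=
  finProdFinEquiv.trans (finCongr (by ring))

/-- The recursively defined pair `(𝒥_m, 𝒜_m)`:
`𝒥_0 = 𝒜_0 = J_1`, `𝒥_m = J_q ⊗ 𝒜_{m-1}`, `𝒜_m = I_q ⊗ 𝒥_{m-1} + Q ⊗ 𝒜_{m-1}`. -/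
def JArec (q : ℕ) (Q : Matrix (Fin q) (Fin q) ℝ) :
    (m : ℕ) → Matrix (Fin (q ^ m)) (Fin (q ^ m)) ℝ × Matrix (Fin (q ^ m)) (Fin (q ^ m)) ℝ
  | 0 => (Matrix.of fun _ _ => 1, Matrix.of fun _ _ => 1)
  | m + 1 =>
    (Matrix.reindex (finPowEquiv q m) (finPowEquiv q m) (Jmat q ⊗ₖ (JArec q Q m).2),
     Matrix.reindex (finPowEquiv q m) (finPowEquiv q m)
       ((1 : Matrix (Fin q) (Fin q) ℝ) ⊗ₖ (JArec q Q m).1 + Q ⊗ₖ (JArec q Q m).2))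

/-- `𝒥_m`. -/
def Jm (q : ℕ) (Q : Matrix (Fin q) (Fin q) ℝ) (m : ℕ) :
    Matrix (Fin (q ^ m)) (Fin (q ^ m)) ℝ := (JArec q Q m).1

/-- `𝒜_m`. -/
def Am (q : ℕ) (Q : Matrix (Fin q) (Fin q) ℝ) (m : ℕ) :
    Matrix (Fin (q ^ m)) (Fin (q ^ m)) ℝ := (JArec q Q m).2

/-- for a skew symmetric core `Q` of order `q`, the matrices `𝒥_m` and
`𝒜_m` are amicable for every `m ≥ 0`. -/
theorem stmt_4 (q : ℕ) (Q : Matrix (Fin q) (Fin q) ℝ) (hQ : IsSkewCore q Q) (m : ℕ) :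
    Jm q Q m * (Am q Q m)ᵀ = Am q Q m * (Jm q Q m)ᵀ := by
  obtain ⟨-, -, hT, hQJ, hJQ, -⟩ := hQ
  have hJ : (Jmat q)ᵀ = Jmat q := rfl
  induction m with
  | zero => rfl
  | succ m ih =>
    simp only [Jm, Am] at ih
    simp only [Jm, Am, JArec, reindex_apply, transpose_submatrix, submatrix_mul_equiv]
    congr 1
    -- Since `Jᵀ = J`, `Qᵀ = -Q` and `J Q = Q J = 0`, the terms containing `Q` vanish and the two
    -- products become `J ⊗ 𝒜_m 𝒥_mᵀ` and `J ⊗ 𝒥_m 𝒜_mᵀ`, equal by the induction hypothesis.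
    simp [transpose_add, ← kroneckerMap_transpose, mul_add, add_mul, ← mul_kronecker_mul,
      hT, hJ, hQJ, hJQ, ih]
end

section
/- Let Q be a skew symmetric core of order q and define 𝒥_m and 𝒜_m recursively as above. Then for every integer m ≥ 0, 𝒥_m 𝒥_m^T + q·𝒜_m 𝒜_m^T = q^m (q+1) I_{q^m}. -/
/-!
Induction on `m`, carrying along the amicability relation `𝒜_m 𝒥_mᵀ = 𝒥_m 𝒜_mᵀ`.
For a step `𝒥' = J ⊗ 𝒜`, `𝒜' = I ⊗ 𝒥 + Q ⊗ 𝒜`, the mixed-product rule gives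

* `𝒥' 𝒥'ᵀ = q J ⊗ 𝒜 𝒜ᵀ`,
* `𝒜' 𝒜'ᵀ = I ⊗ 𝒥 𝒥ᵀ + (q I - J) ⊗ 𝒜 𝒜ᵀ + Q ⊗ (𝒜 𝒥ᵀ - 𝒥 𝒜ᵀ)`,

using `Qᵀ = -Q` and `Q Qᵀ = q I - J`. The last term vanishes by amicability, the `J`-terms cancel
in `𝒥' 𝒥'ᵀ + q 𝒜' 𝒜'ᵀ`, and `q I ⊗ (𝒥 𝒥ᵀ + q 𝒜 𝒜ᵀ)` remains. Amicability propagates because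
`Q J = J Q = 0`: `𝒜' 𝒥'ᵀ = J ⊗ 𝒥 𝒜ᵀ` and `𝒥' 𝒜'ᵀ = J ⊗ 𝒜 𝒥ᵀ`.
-/

open Matrix Kronecker

lemma Jmat_transpose (q : ℕ) : (Jmat q)ᵀ = Jmat q := rfl

lemma Jmat_mul_Jmat (q : ℕ) : Jmat q * Jmat q = (q : ℝ) • Jmat q := by
  ext i j
  simp [Jmat, Matrix.mul_apply]

/-- Amicability propagates through one step of the recursion. -/
lemma amicable_step {q : ℕ} {Q : Matrix (Fin q) (Fin q) ℝ} (hQ : IsSkewCore q Q)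
    {n : Type*} [Fintype n] (X A : Matrix n n ℝ) (h : A * Xᵀ = X * Aᵀ) :
    ((1 : Matrix (Fin q) (Fin q) ℝ) ⊗ₖ X + Q ⊗ₖ A) * (Jmat q ⊗ₖ A)ᵀ =
      (Jmat q ⊗ₖ A) * ((1 : Matrix (Fin q) (Fin q) ℝ) ⊗ₖ X + Q ⊗ₖ A)ᵀ := by
  obtain ⟨-, -, hT, hQJ, hJQ, -⟩ := hQ
  simp only [Matrix.transpose_add, ← Matrix.kroneckerMap_transpose, Matrix.add_mul,
    Matrix.mul_add, ← Matrix.mul_kronecker_mul, Jmat_transpose, hT, Matrix.transpose_one,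
    Matrix.one_mul, Matrix.mul_one, Matrix.mul_neg, hQJ, hJQ, neg_zero, Matrix.zero_kronecker, h]

/-- One step of the recursion multiplies `X Xᵀ + q A Aᵀ` by `q`, as a Kronecker product
with the identity, provided `X` and `A` are amicable. -/
lemma gram_step {q : ℕ} {Q : Matrix (Fin q) (Fin q) ℝ} (hQ : IsSkewCore q Q)
    {n : Type*} [Fintype n] (X A : Matrix n n ℝ) (h : A * Xᵀ = X * Aᵀ) :
    (Jmat q ⊗ₖ A) * (Jmat q ⊗ₖ A)ᵀ +
      (q : ℝ) • (((1 : Matrix (Fin q) (Fin q) ℝ) ⊗ₖ X + Q ⊗ₖ A) *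
        ((1 : Matrix (Fin q) (Fin q) ℝ) ⊗ₖ X + Q ⊗ₖ A)ᵀ) =
      (1 : Matrix (Fin q) (Fin q) ℝ) ⊗ₖ ((q : ℝ) • (X * Xᵀ + (q : ℝ) • (A * Aᵀ))) := by
  obtain ⟨-, -, hT, -, -, hQQ⟩ := hQ
  simp only [Matrix.transpose_add, ← Matrix.kroneckerMap_transpose, Matrix.add_mul,
    Matrix.mul_add, ← Matrix.mul_kronecker_mul, Jmat_transpose, hQQ, Matrix.transpose_one,
    Matrix.one_mul, Matrix.mul_one, Jmat_mul_Jmat, h]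
  rw [hT]
  ext ⟨i, i'⟩ ⟨j, j'⟩
  simp only [Matrix.add_apply, Matrix.smul_apply, Matrix.kroneckerMap_apply, Matrix.sub_apply,
    Matrix.neg_apply, smul_eq_mul]
  ring

lemma reindex_mul_transpose {l n : Type*} [Fintype l] [Fintype n] (e : l ≃ n)
    (M N : Matrix l l ℝ) :
    Matrix.reindex e e M * (Matrix.reindex e e N)ᵀ = Matrix.reindex e e (M * Nᵀ) := by
  simp only [Matrix.reindex_apply, Matrix.transpose_submatrix, Matrix.submatrix_mul_equiv]

lemma Jm_succ (q : ℕ) (Q : Matrix (Fin q) (Fin q) ℝ) (m : ℕ) :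
    Jm q Q (m + 1) =
      Matrix.reindex (finPowEquiv q m) (finPowEquiv q m) (Jmat q ⊗ₖ Am q Q m) := rfl

lemma Am_succ (q : ℕ) (Q : Matrix (Fin q) (Fin q) ℝ) (m : ℕ) :
    Am q Q (m + 1) = Matrix.reindex (finPowEquiv q m) (finPowEquiv q m)
      ((1 : Matrix (Fin q) (Fin q) ℝ) ⊗ₖ Jm q Q m + Q ⊗ₖ Am q Q m) := rfl

lemma Am_mul_Jm_transpose {q : ℕ} {Q : Matrix (Fin q) (Fin q) ℝ} (hQ : IsSkewCore q Q) (m : ℕ) :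
    Am q Q m * (Jm q Q m)ᵀ = Jm q Q m * (Am q Q m)ᵀ := by
  induction m with
  | zero => rfl
  | succ m ih =>
    rw [Jm_succ, Am_succ, reindex_mul_transpose, reindex_mul_transpose, amicable_step hQ _ _ ih]

/-- for a skew symmetric core `Q` of order `q`,
`𝒥_m 𝒥_mᵀ + q·𝒜_m 𝒜_mᵀ = q^m (q+1) I` for every `m ≥ 0`. -/
theorem stmt_5 (q : ℕ) (Q : Matrix (Fin q) (Fin q) ℝ) (hQ : IsSkewCore q Q) (m : ℕ) :
    Jm q Q m * (Jm q Q m)ᵀ + (q : ℝ) • (Am q Q m * (Am q Q m)ᵀ) =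
      ((q : ℝ) ^ m * ((q : ℝ) + 1)) • (1 : Matrix (Fin (q ^ m)) (Fin (q ^ m)) ℝ) := by
  induction m with
  | zero =>
    -- `Fin (q ^ 0)` is `Fin 1` by definition; stating the identity over `Fin 1` lets `simp` evaluate
    -- the sums.
    have h : ∀ M : Matrix (Fin 1) (Fin 1) ℝ, M = Matrix.of (fun _ _ => 1) →
        M * Mᵀ + (q : ℝ) • (M * Mᵀ) =
          ((q : ℝ) ^ 0 * ((q : ℝ) + 1)) • (1 : Matrix (Fin 1) (Fin 1) ℝ) := by
      rintro _ rfl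
      ext i j
      obtain rfl := Subsingleton.elim i j
      simp [Matrix.mul_apply, add_comm]
    exact h _ rfl
  | succ m ih =>
    have key := gram_step hQ _ _ (Am_mul_Jm_transpose hQ m)
    rw [ih, smul_smul, Matrix.kronecker_smul, Matrix.one_kronecker_one] at key
    rw [Jm_succ, Am_succ, reindex_mul_transpose, reindex_mul_transpose]
    -- Reindexing is additive and homogeneous by definition, so it can be pulled out of the sum.
    refine (congrArg (Matrix.reindex (finPowEquiv q m) (finPowEquiv q m)) key).trans ?_
    rw [Matrix.reindex_apply, Matrix.submatrix_smul, Pi.smul_apply, Pi.smul_apply,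
      Matrix.submatrix_one_equiv, pow_succ' (q : ℝ), mul_assoc]
end

section
/- Let Q be a symmetric core of order q and define complex matrices recursively by 𝒞_0 = 𝒟_0 = the 1×1 all-ones matrix, and for m ≥ 1, 𝒞_m = J_q ⊗ 𝒟_{m−1} and 𝒟_m = I_q ⊗ 𝒞_{m−1} + i·Q ⊗ 𝒟_{m−1}. Then for every integer m ≥ 0, 𝒞_m 𝒟_m* = 𝒟_m 𝒞_m* and 𝒞_m 𝒞_m* + q·𝒟_m 𝒟_m* = q^m (q+1) I_{q^m}. -/
/-!
Induction on `m`. Write `(C, D)` for the pair at level `m`. Since `J Q = Q J = 0`, at level `m + 1`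
the mixed products are `J ⊗ D Cᴴ` and `J ⊗ C Dᴴ`, which agree by the first identity at level `m`.
From `J² = q J` one gets `q J ⊗ D Dᴴ` for the first square, and from `Q² = q I - J` together with
`C Dᴴ = D Cᴴ` (which cancels the terms in `i Q`) one gets `I ⊗ C Cᴴ + (q I - J) ⊗ D Dᴴ` for the
second. Adding `q` times the latter to the former, the terms in `J` cancel and
`q I ⊗ (C Cᴴ + q D Dᴴ)` is left. The lemma `core_step` is this computation for arbitrary index
types, without the reindexing.
-/

open Matrix Kronecker

/-- `Q` is a symmetric core of order `q`: a `q × q` real matrix with zero diagonal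
and off-diagonal entries `±1` such that `Qᵀ = Q`, `Q J = J Q = 0` and
`Q Qᵀ = q I - J`. -/
def IsSymCore (q : ℕ) (Q : Matrix (Fin q) (Fin q) ℝ) : Prop :=
  (∀ i, Q i i = 0) ∧
  (∀ i j, i ≠ j → Q i j = 1 ∨ Q i j = -1) ∧
  Qᵀ = Q ∧
  Q * Jmat q = 0 ∧
  Jmat q * Q = 0 ∧
  Q * Qᵀ = (q : ℝ) • (1 : Matrix (Fin q) (Fin q) ℝ) - Jmat q

/-- The recursively defined pair of complex matrices `(𝒞_m, 𝒟_m)`: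
`𝒞_0 = 𝒟_0 = J_1`, `𝒞_m = J_q ⊗ 𝒟_{m-1}`, `𝒟_m = I_q ⊗ 𝒞_{m-1} + i·Q ⊗ 𝒟_{m-1}`. -/
def CDrec (q : ℕ) (Q : Matrix (Fin q) (Fin q) ℝ) :
    (m : ℕ) → Matrix (Fin (q ^ m)) (Fin (q ^ m)) ℂ × Matrix (Fin (q ^ m)) (Fin (q ^ m)) ℂ
  | 0 => (Matrix.of fun _ _ => 1, Matrix.of fun _ _ => 1)
  | m + 1 =>
    (Matrix.reindex (finPowEquiv q m) (finPowEquiv q m)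
        ((Jmat q).map Complex.ofReal ⊗ₖ (CDrec q Q m).2),
     Matrix.reindex (finPowEquiv q m) (finPowEquiv q m)
       ((1 : Matrix (Fin q) (Fin q) ℂ) ⊗ₖ (CDrec q Q m).1 +
          (Complex.I • (Q.map Complex.ofReal)) ⊗ₖ (CDrec q Q m).2))

/-- `𝒞_m`. -/
def Cm (q : ℕ) (Q : Matrix (Fin q) (Fin q) ℝ) (m : ℕ) :
    Matrix (Fin (q ^ m)) (Fin (q ^ m)) ℂ := (CDrec q Q m).1

/-- `𝒟_m`. -/
def Dm (q : ℕ) (Q : Matrix (Fin q) (Fin q) ℝ) (m : ℕ) :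
    Matrix (Fin (q ^ m)) (Fin (q ^ m)) ℂ := (CDrec q Q m).2

/-- The induction step: `P` plays the role of the complexified core, `J` of the all-ones matrix. -/
lemma core_step {n k : Type*} [Fintype n] [DecidableEq n] [Fintype k]
    {J P : Matrix n n ℂ} {C D : Matrix k k ℂ} {q : ℂ}
    (hJ : Jᴴ = J) (hP : Pᴴ = P) (hPJ : P * J = 0) (hJP : J * P = 0)
    (hJJ : J * J = q • J) (hPP : P * P = q • (1 : Matrix n n ℂ) - J)
    (hCD : C * Dᴴ = D * Cᴴ) :
    (J ⊗ₖ D) * ((1 : Matrix n n ℂ) ⊗ₖ C + (Complex.I • P) ⊗ₖ D)ᴴ =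
        ((1 : Matrix n n ℂ) ⊗ₖ C + (Complex.I • P) ⊗ₖ D) * (J ⊗ₖ D)ᴴ ∧
      (J ⊗ₖ D) * (J ⊗ₖ D)ᴴ + q • (((1 : Matrix n n ℂ) ⊗ₖ C + (Complex.I • P) ⊗ₖ D) *
          ((1 : Matrix n n ℂ) ⊗ₖ C + (Complex.I • P) ⊗ₖ D)ᴴ) =
        q • ((1 : Matrix n n ℂ) ⊗ₖ (C * Cᴴ + q • (D * Dᴴ))) := by
  have hX : ((1 : Matrix n n ℂ) ⊗ₖ C + (Complex.I • P) ⊗ₖ D)ᴴ =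
      (1 : Matrix n n ℂ) ⊗ₖ Cᴴ + (-Complex.I • P) ⊗ₖ Dᴴ := by
    simp [conjTranspose_add, conjTranspose_kronecker, conjTranspose_smul, hP]
  have hY : (J ⊗ₖ D)ᴴ = J ⊗ₖ Dᴴ := by rw [conjTranspose_kronecker, hJ]
  rw [hX, hY]
  constructor
  · simp only [mul_add, add_mul, ← mul_kronecker_mul, mul_one, one_mul, mul_smul_comm,
      smul_mul_assoc, hJP, hPJ, hCD, smul_zero, zero_kronecker]
  · simp only [mul_add, add_mul, ← mul_kronecker_mul, mul_one, one_mul, mul_smul_comm,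
      smul_mul_assoc, hJJ, hPP, hCD, smul_kronecker, kronecker_smul, kronecker_add,
      sub_eq_add_neg, add_kronecker, smul_smul, smul_add]
    have hneg : (-J) ⊗ₖ (D * Dᴴ) = -(J ⊗ₖ (D * Dᴴ)) := by
      rw [← neg_one_smul ℂ J, smul_kronecker, neg_one_smul]
    rw [hneg]
    match_scalars <;> ring_nf <;> simp [Complex.I_sq]

/-- for a symmetric core `Q` of order `q`, the matrices `𝒞_m` and `𝒟_m`
satisfy `𝒞_m 𝒟_mᴴ = 𝒟_m 𝒞_mᴴ` and `𝒞_m 𝒞_mᴴ + q·𝒟_m 𝒟_mᴴ = q^m (q+1) I` for all `m ≥ 0`. -/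
theorem stmt_9 (q : ℕ) (Q : Matrix (Fin q) (Fin q) ℝ) (hQ : IsSymCore q Q) (m : ℕ) :
    Cm q Q m * (Dm q Q m)ᴴ = Dm q Q m * (Cm q Q m)ᴴ ∧
      Cm q Q m * (Cm q Q m)ᴴ + (q : ℂ) • (Dm q Q m * (Dm q Q m)ᴴ) =
        ((q : ℂ) ^ m * ((q : ℂ) + 1)) • (1 : Matrix (Fin (q ^ m)) (Fin (q ^ m)) ℂ) := by
  obtain ⟨-, -, hT, hQJ, hJQ, hQQ⟩ := hQ
  rw [hT] at hQQ
  have hmul (A B : Matrix (Fin q) (Fin q) ℝ) :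
      (A * B).map Complex.ofReal = A.map Complex.ofReal * B.map Complex.ofReal :=
    Matrix.map_mul (f := Complex.ofRealHom)
  have hJ : ((Jmat q).map Complex.ofReal)ᴴ = (Jmat q).map Complex.ofReal := by
    ext i j; simp [Jmat]
  have hP : (Q.map Complex.ofReal)ᴴ = Q.map Complex.ofReal := by
    ext i j
    simpa using congrFun (congrFun hT i) j
  have hPJ : Q.map Complex.ofReal * (Jmat q).map Complex.ofReal = 0 := by
    rw [← hmul, hQJ]; ext; simp
  have hJP : (Jmat q).map Complex.ofReal * Q.map Complex.ofReal = 0 := by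
    rw [← hmul, hJQ]; ext; simp
  have hJJ : (Jmat q).map Complex.ofReal * (Jmat q).map Complex.ofReal =
      (q : ℂ) • (Jmat q).map Complex.ofReal := by
    ext i j; simp [Jmat, Matrix.mul_apply]
  have hPP : Q.map Complex.ofReal * Q.map Complex.ofReal =
      (q : ℂ) • (1 : Matrix (Fin q) (Fin q) ℂ) - (Jmat q).map Complex.ofReal := by
    rw [← hmul, hQQ]
    ext i j
    by_cases h : i = j <;> simp [h]
  induction m with
  | zero =>
    refine ⟨rfl, ?_⟩
    have key : (Matrix.of fun _ _ => 1 : Matrix (Fin 1) (Fin 1) ℂ) *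
          (Matrix.of fun _ _ => 1 : Matrix (Fin 1) (Fin 1) ℂ)ᴴ +
        (q : ℂ) • ((Matrix.of fun _ _ => 1 : Matrix (Fin 1) (Fin 1) ℂ) *
          (Matrix.of fun _ _ => 1 : Matrix (Fin 1) (Fin 1) ℂ)ᴴ) =
        ((q : ℂ) ^ 0 * ((q : ℂ) + 1)) • (1 : Matrix (Fin 1) (Fin 1) ℂ) := by
      ext i j
      rw [Subsingleton.elim j i]
      simp [Matrix.mul_apply, add_comm]
    exact key
  | succ m ih =>
    obtain ⟨ih1, ih2⟩ := ih
    obtain ⟨h1, h2⟩ := core_step hJ hP hPJ hJP hJJ hPP ih1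
    have hC : Cm q Q (m + 1) = Matrix.reindexAlgEquiv ℂ ℂ (finPowEquiv q m)
        ((Jmat q).map Complex.ofReal ⊗ₖ Dm q Q m) := rfl
    have hD : Dm q Q (m + 1) = Matrix.reindexAlgEquiv ℂ ℂ (finPowEquiv q m)
        ((1 : Matrix (Fin q) (Fin q) ℂ) ⊗ₖ Cm q Q m +
          (Complex.I • (Q.map Complex.ofReal)) ⊗ₖ Dm q Q m) := rfl
    have hstar (A : Matrix (Fin q × Fin (q ^ m)) (Fin q × Fin (q ^ m)) ℂ) :
        (Matrix.reindexAlgEquiv ℂ ℂ (finPowEquiv q m) A)ᴴ =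
          Matrix.reindexAlgEquiv ℂ ℂ (finPowEquiv q m) Aᴴ := rfl
    rw [hC, hD, hstar, hstar]
    simp only [← map_mul, ← map_smul, ← map_add]
    refine ⟨congrArg _ h1, ?_⟩
    rw [h2, ih2, kronecker_smul, one_kronecker_one, map_smul, map_smul, map_one, smul_smul]
    congr 1
    ring
end

section
/- Let Q be a symmetric core of order q, let S be the (q+1)×(q+1) real matrix with block form S = [[0, j_q], [j_q^T, Q]] where j_q is the 1×q all-ones row vector, and let 𝒞_m, 𝒟_m be as defined recursively above. Then for every integer m ≥ 0, the complex matrix K = S ⊗ 𝒟_m + i·I_{q+1} ⊗ 𝒞_m satisfies K K* = q^m (q+1) I_{q^m (q+1)}, and every entry of K lies in {1, −1, i, −i}; that is, K is a quaternary Hadamard matrix of order q^m (q+1). -/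
/-!
Write `C`, `D` for `𝒞_m`, `𝒟_m` and `C'`, `D'` for `𝒞_{m+1}`, `𝒟_{m+1}`. Two identities carry the argument:

* `C * Dᴴ = D * Cᴴ`, and
* `C * Cᴴ + q • (D * Dᴴ) = q ^ m (q + 1) • 1`.

Both propagate from `m` to `m + 1` (`pair_step`): since `J * Q = 0`, the products
`(J ⊗ D)(1 ⊗ C + i Q ⊗ D)ᴴ` and its adjoint reduce to `J ⊗ D Cᴴ` and `J ⊗ C Dᴴ`; and since
`Q Qᴴ = q - J`, the `J` part of `q • D' D'ᴴ` cancels `C' C'ᴴ = q J ⊗ D Dᴴ`, the mixed terms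
`i Q ⊗ (D Cᴴ - C Dᴴ)` being zero.

As `S Sᴴ = q` (`smat_mul_self`), the same two identities give
`K Kᴴ = 1 ⊗ (q D Dᴴ + C Cᴴ) + i S ⊗ (C Dᴴ - D Cᴴ) = q ^ m (q + 1) • 1`.

The entries of `𝒟_m` and `K` are fourth roots of unity because `1` and `Q` (respectively `1` and
`S`) have disjoint supports covering every position, so that in each position exactly one
of the two summands is nonzero; the entries of `𝒞_m` are entries of `𝒟_{m-1}`.
-/

open Matrix Kronecker

/-- The `(q+1) × (q+1)` bordered matrix `S = [[0, j], [jᵀ, Q]]`, indexed by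
`Unit ⊕ Fin q` (a type of cardinality `q + 1`). -/
def Smat (q : ℕ) (Q : Matrix (Fin q) (Fin q) ℝ) :
    Matrix (Unit ⊕ Fin q) (Unit ⊕ Fin q) ℝ :=
  Matrix.fromBlocks 0 (Matrix.of fun _ _ => 1) (Matrix.of fun _ _ => 1) Q

/-- The matrix `K = S ⊗ 𝒟_m + i·I_{q+1} ⊗ 𝒞_m`, of order `(q+1)·q^m`. -/
def Kmat (q : ℕ) (Q : Matrix (Fin q) (Fin q) ℝ) (m : ℕ) :
    Matrix ((Unit ⊕ Fin q) × Fin (q ^ m)) ((Unit ⊕ Fin q) × Fin (q ^ m)) ℂ :=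
  (Smat q Q).map Complex.ofReal ⊗ₖ Dm q Q m +
    Complex.I • ((1 : Matrix (Unit ⊕ Fin q) (Unit ⊕ Fin q) ℂ) ⊗ₖ Cm q Q m)

/-- The predicate that `z` is one of `1, -1, i, -i`. -/
def IsQuat (z : ℂ) : Prop := z ∈ ({1, -1, Complex.I, -Complex.I} : Set ℂ)

lemma IsQuat.neg {z : ℂ} (h : IsQuat z) : IsQuat (-z) := by
  rcases h with h | h | h | h <;> rw [h] <;> simp [IsQuat]

lemma IsQuat.I_mul {z : ℂ} (h : IsQuat z) : IsQuat (Complex.I * z) := by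
  rcases h with h | h | h | h <;> rw [h] <;> simp [IsQuat]

lemma sub_kron {ι κ : Type*} (A B : Matrix ι ι ℂ) (C : Matrix κ κ ℂ) :
    (A - B) ⊗ₖ C = A ⊗ₖ C - B ⊗ₖ C := by
  ext
  simp [sub_mul]

lemma kron_sub {ι κ : Type*} (A : Matrix ι ι ℂ) (B C : Matrix κ κ ℂ) :
    A ⊗ₖ (B - C) = A ⊗ₖ B - A ⊗ₖ C := by
  ext
  simp [mul_sub]

/-- One step of the recursion preserves the two identities. Here `A` and `J` stand for the complex
versions of the core `Q` and of the all-ones matrix. -/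
lemma pair_step {ι κ : Type*} [Fintype ι] [DecidableEq ι] [Fintype κ] [DecidableEq κ]
    (A J : Matrix ι ι ℂ) (C D : Matrix κ κ ℂ) (q : ℕ) (c : ℂ)
    (hA : Aᴴ = A) (hJ : Jᴴ = J) (hAJ : A * J = 0) (hJA : J * A = 0)
    (hJJ : J * J = (q : ℂ) • J) (hAA : A * A = (q : ℂ) • (1 : Matrix ι ι ℂ) - J)
    (h₁ : C * Dᴴ = D * Cᴴ) (h₂ : C * Cᴴ + (q : ℂ) • (D * Dᴴ) = c • (1 : Matrix κ κ ℂ)) :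
    (J ⊗ₖ D) * ((1 : Matrix ι ι ℂ) ⊗ₖ C + (Complex.I • A) ⊗ₖ D)ᴴ =
        ((1 : Matrix ι ι ℂ) ⊗ₖ C + (Complex.I • A) ⊗ₖ D) * (J ⊗ₖ D)ᴴ ∧
      (J ⊗ₖ D) * (J ⊗ₖ D)ᴴ + (q : ℂ) •
        (((1 : Matrix ι ι ℂ) ⊗ₖ C + (Complex.I • A) ⊗ₖ D) *
          ((1 : Matrix ι ι ℂ) ⊗ₖ C + (Complex.I • A) ⊗ₖ D)ᴴ) =
        (q * c) • (1 : Matrix (ι × κ) (ι × κ) ℂ) := by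
  have h₂' : C * Cᴴ = c • (1 : Matrix κ κ ℂ) - (q : ℂ) • (D * Dᴴ) := eq_sub_of_add_eq h₂
  simp only [conjTranspose_add, conjTranspose_kronecker, conjTranspose_one, conjTranspose_smul,
    hA, hJ, mul_add, add_mul, ← mul_kronecker_mul, Matrix.one_mul, Matrix.mul_one,
    Matrix.smul_mul, Matrix.mul_smul, hAJ, hJA, hJJ, hAA, h₁, h₂', smul_kronecker,
    zero_kronecker, neg_zero, kron_sub, sub_kron, kronecker_smul, smul_smul, smul_zero, add_zero,
    one_kronecker_one, true_and, smul_add, smul_sub, Complex.star_def, Complex.conj_I,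
    Complex.I_mul_I, mul_neg, neg_smul]
  match_scalars <;> ring_nf <;> rw [Complex.I_sq] <;> ring

/-- The final product `K Kᴴ`, computed from `S Sᴴ = q` and the two identities for `C`, `D`. -/
lemma final_step {ι κ : Type*} [Fintype ι] [DecidableEq ι] [Fintype κ] [DecidableEq κ]
    (S : Matrix ι ι ℂ) (C D : Matrix κ κ ℂ) (q : ℕ) (c : ℂ)
    (hS : Sᴴ = S) (hSS : S * S = (q : ℂ) • (1 : Matrix ι ι ℂ))
    (h₁ : C * Dᴴ = D * Cᴴ) (h₂ : C * Cᴴ + (q : ℂ) • (D * Dᴴ) = c • (1 : Matrix κ κ ℂ)) :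
    (S ⊗ₖ D + Complex.I • ((1 : Matrix ι ι ℂ) ⊗ₖ C)) *
        (S ⊗ₖ D + Complex.I • ((1 : Matrix ι ι ℂ) ⊗ₖ C))ᴴ =
      c • (1 : Matrix (ι × κ) (ι × κ) ℂ) := by
  have h₂' : C * Cᴴ = c • (1 : Matrix κ κ ℂ) - (q : ℂ) • (D * Dᴴ) := eq_sub_of_add_eq h₂
  simp only [conjTranspose_add, conjTranspose_kronecker, conjTranspose_one, conjTranspose_smul,
    hS, mul_add, add_mul, ← mul_kronecker_mul, Matrix.one_mul, Matrix.mul_one,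
    Matrix.smul_mul, Matrix.mul_smul, hSS, h₁, h₂', smul_kronecker,
    kron_sub, kronecker_smul, smul_smul,
    one_kronecker_one, smul_sub, Complex.star_def, Complex.conj_I,
    mul_neg, neg_smul]
  match_scalars <;> ring_nf <;> rw [Complex.I_sq] <;> ring

section Core

variable {q : ℕ} {Q : Matrix (Fin q) (Fin q) ℝ}

lemma map_ofReal_mul {ι : Type*} [Fintype ι] (A B : Matrix ι ι ℝ) :
    A.map Complex.ofReal * B.map Complex.ofReal = (A * B).map Complex.ofReal :=
  (Matrix.map_mul (f := Complex.ofRealHom)).symm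

lemma conjTranspose_map_ofReal {ι : Type*} {A : Matrix ι ι ℝ} (h : Aᵀ = A) :
    (A.map Complex.ofReal)ᴴ = A.map Complex.ofReal := by
  ext i j
  have : A j i = A i j := congrFun (congrFun h i) j
  simp [this]

lemma map_ofReal_natCast_smul_one {ι : Type*} [DecidableEq ι] (n : ℕ) :
    ((n : ℝ) • (1 : Matrix ι ι ℝ)).map Complex.ofReal = (n : ℂ) • (1 : Matrix ι ι ℂ) := by
  ext i j
  by_cases h : i = j <;> simp [h]

lemma Jmat_mul_self : Jmat q * Jmat q = (q : ℝ) • Jmat q := by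
  ext i j
  simp [Jmat, Matrix.mul_apply]

lemma IsSymCore.sq (hQ : IsSymCore q Q) :
    Q * Q = (q : ℝ) • (1 : Matrix (Fin q) (Fin q) ℝ) - Jmat q := by
  obtain ⟨-, -, ht, -, -, h⟩ := hQ
  rwa [ht] at h

lemma smat_transpose (hQ : IsSymCore q Q) : (Smat q Q)ᵀ = Smat q Q := by
  rw [Smat, fromBlocks_transpose, hQ.2.2.1]
  rfl

/-- The bordered matrix satisfies `S * S = q`; the border adds `J` to `Q * Q = q - J`. -/
lemma smat_mul_self (hQ : IsSymCore q Q) :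
    Smat q Q * Smat q Q = (q : ℝ) • (1 : Matrix (Unit ⊕ Fin q) (Unit ⊕ Fin q) ℝ) := by
  have hs := hQ.sq
  obtain ⟨-, -, -, hQJ, hJQ, -⟩ := hQ
  rw [Smat, fromBlocks_multiply, ← fromBlocks_one, fromBlocks_smul, hs]
  congr 1
  · ext i j
    simp [Matrix.mul_apply]
  · ext i j
    simpa [Matrix.mul_apply, Jmat] using congrFun (congrFun hJQ j) j
  · ext i j
    simpa [Matrix.mul_apply, Jmat] using congrFun (congrFun hQJ i) i
  · ext i j
    simp [Matrix.mul_apply, Jmat]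

lemma reindex_mul_conjTranspose {ι κ : Type*} [Fintype ι] [Fintype κ] (e : ι ≃ κ)
    (A B : Matrix ι ι ℂ) :
    reindex e e A * (reindex e e B)ᴴ = reindex e e (A * Bᴴ) := by
  simp [conjTranspose_submatrix, submatrix_mul_equiv]

lemma CDrec_identities (hQ : IsSymCore q Q) (m : ℕ) :
    Cm q Q m * (Dm q Q m)ᴴ = Dm q Q m * (Cm q Q m)ᴴ ∧
      Cm q Q m * (Cm q Q m)ᴴ + (q : ℂ) • (Dm q Q m * (Dm q Q m)ᴴ) =
        ((q : ℂ) ^ m * ((q : ℂ) + 1)) • (1 : Matrix (Fin (q ^ m)) (Fin (q ^ m)) ℂ) := by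
  induction m with
  | zero =>
    refine ⟨rfl, ?_⟩
    ext i j
    -- `Fin (q ^ 0)` has a single element, so this is the scalar identity `1 + q = q + 1`.
    have hij : i = j := Fin.ext (by have := i.2; have := j.2; simp only [pow_zero] at *; omega)
    have hC : ∀ r c, Cm q Q 0 r c = 1 := fun _ _ => rfl
    have hD : ∀ r c, Dm q Q 0 r c = 1 := fun _ _ => rfl
    rw [hij, Matrix.add_apply, Matrix.smul_apply, Matrix.smul_apply, Matrix.mul_apply,
      Matrix.mul_apply]
    simp only [conjTranspose_apply, hC, hD, Matrix.one_apply_eq, Finset.sum_const,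
      Finset.card_univ, Fintype.card_fin, pow_zero]
    simp [add_comm]
  | succ m ih =>
    have hs := hQ.sq
    have hQ' := hQ
    obtain ⟨-, -, ht, hQJ, hJQ, -⟩ := hQ'
    have key := pair_step (Q.map Complex.ofReal) ((Jmat q).map Complex.ofReal)
      (Cm q Q m) (Dm q Q m) q _ (conjTranspose_map_ofReal ht) (conjTranspose_map_ofReal rfl)
      (by rw [map_ofReal_mul, hQJ]; ext; simp) (by rw [map_ofReal_mul, hJQ]; ext; simp)
      (by rw [map_ofReal_mul, Jmat_mul_self]; ext; simp)
      (by
        rw [map_ofReal_mul, hs, ← map_ofReal_natCast_smul_one]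
        ext
        simp only [map_apply, Matrix.sub_apply, Complex.ofReal_sub])
      ih.1 ih.2
    have hC : Cm q Q (m + 1) = reindex (finPowEquiv q m) (finPowEquiv q m)
        ((Jmat q).map Complex.ofReal ⊗ₖ Dm q Q m) := rfl
    have hD : Dm q Q (m + 1) = reindex (finPowEquiv q m) (finPowEquiv q m)
        ((1 : Matrix (Fin q) (Fin q) ℂ) ⊗ₖ Cm q Q m +
          (Complex.I • (Q.map Complex.ofReal)) ⊗ₖ Dm q Q m) := rfl
    simp only [hC, hD, reindex_mul_conjTranspose]
    refine ⟨by rw [key.1], ?_⟩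
    have h₂ := congrArg (reindex (finPowEquiv q m) (finPowEquiv q m)) key.2
    simp only [reindex_apply, submatrix_add, submatrix_smul, submatrix_one_equiv,
      Pi.add_apply, Pi.smul_apply] at h₂ ⊢
    rw [h₂, pow_succ']
    ring_nf

lemma CDrec_isQuat (hQ : IsSymCore q Q) (m : ℕ) :
    (∀ r c, IsQuat (Cm q Q m r c)) ∧ ∀ r c, IsQuat (Dm q Q m r c) := by
  induction m with
  | zero => exact ⟨fun _ _ => Or.inl rfl, fun _ _ => Or.inl rfl⟩
  | succ m ih =>
    obtain ⟨hC, hD⟩ := ih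
    constructor <;> intro r c
    · have : Cm q Q (m + 1) r c =
          Dm q Q m ((finPowEquiv q m).symm r).2 ((finPowEquiv q m).symm c).2 := by
        simp [Cm, Dm, CDrec, Jmat]
      rw [this]
      exact hD _ _
    · generalize hr : (finPowEquiv q m).symm r = x
      generalize hc : (finPowEquiv q m).symm c = y
      have : Dm q Q (m + 1) r c = (1 : Matrix (Fin q) (Fin q) ℂ) x.1 y.1 * Cm q Q m x.2 y.2 +
          Complex.I * (Q x.1 y.1 : ℂ) * Dm q Q m x.2 y.2 := by
        simp [Cm, Dm, CDrec, hr, hc]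
      rw [this]
      by_cases h : x.1 = y.1
      · simpa [Matrix.one_apply, h, hQ.1] using hC x.2 y.2
      · rcases hQ.2.1 _ _ h with h' | h'
        · simpa [h, h'] using (hD _ _).I_mul
        · simpa [h, h'] using (hD _ _).I_mul.neg

lemma smat_diag (hQ : IsSymCore q Q) (i : Unit ⊕ Fin q) : Smat q Q i i = 0 := by
  rcases i with i | i
  · simp [Smat]
  · simp [Smat, hQ.1]

lemma smat_off_diag (hQ : IsSymCore q Q) {i j : Unit ⊕ Fin q} (h : i ≠ j) :
    Smat q Q i j = 1 ∨ Smat q Q i j = -1 := by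
  rcases i with i | i <;> rcases j with j | j
  · exact absurd rfl h
  · simp [Smat]
  · simp [Smat]
  · exact hQ.2.1 i j fun e => h (by rw [e])

end Core

/-- for a symmetric core `Q` of order `q`, the matrix
`K = S ⊗ 𝒟_m + i·I_{q+1} ⊗ 𝒞_m` satisfies `K Kᴴ = q^m (q+1) I` and every entry of `K`
lies in `{1, -1, i, -i}`; that is, `K` is a quaternary Hadamard matrix of order
`q^m (q+1)`. -/
theorem stmt_10 (q : ℕ) (Q : Matrix (Fin q) (Fin q) ℝ) (hQ : IsSymCore q Q) (m : ℕ) :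
    Kmat q Q m * (Kmat q Q m)ᴴ =
        ((q : ℂ) ^ m * ((q : ℂ) + 1)) •
          (1 : Matrix ((Unit ⊕ Fin q) × Fin (q ^ m)) ((Unit ⊕ Fin q) × Fin (q ^ m)) ℂ) ∧
      ∀ r c, Kmat q Q m r c ∈ ({1, -1, Complex.I, -Complex.I} : Set ℂ) := by
  constructor
  · obtain ⟨h₁, h₂⟩ := CDrec_identities hQ m
    exact final_step _ _ _ q _ (conjTranspose_map_ofReal (smat_transpose hQ))
      (by rw [map_ofReal_mul, smat_mul_self hQ, map_ofReal_natCast_smul_one]) h₁ h₂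
  · intro r c
    obtain ⟨hC, hD⟩ := CDrec_isQuat hQ m
    change IsQuat _
    have : Kmat q Q m r c = (Smat q Q r.1 c.1 : ℂ) * Dm q Q m r.2 c.2 +
        Complex.I * ((1 : Matrix (Unit ⊕ Fin q) (Unit ⊕ Fin q) ℂ) r.1 c.1 *
          Cm q Q m r.2 c.2) := by
      simp [Kmat]
    rw [this]
    by_cases h : r.1 = c.1
    · simpa [Matrix.one_apply, h, smat_diag hQ] using (hC r.2 c.2).I_mul
    · rcases smat_off_diag hQ h with h' | h'
      · simpa [h, h'] using hD _ _
      · simpa [h, h'] using (hD _ _).neg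
end

section
/- Let Q be a skew symmetric core of order q and define 𝒥_m and 𝒜_m recursively as above. Then for every integer m ≥ 0, S(𝒜_{2m+1}) = q^{3m+1}. -/
/-!
The excess is multiplicative on Kronecker products and invariant under reindexing. Skew symmetry
gives `S(Q) = 0`, so the recursion yields `S(𝒥_{m+1}) = q² S(𝒜_m)` and
`S(𝒜_{m+1}) = S(I) S(𝒥_m) + S(Q) S(𝒜_m) = q S(𝒥_m)`. Hence `S(𝒜_{m+2}) = q³ S(𝒜_m)`, and
`S(𝒜_1) = q` starts the induction.
-/

open Matrix Kronecker

/-- The excess `S(M)`: the sum of all entries of `M`. -/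
def excess {k : ℕ} (M : Matrix (Fin k) (Fin k) ℝ) : ℝ := ∑ i, ∑ j, M i j

lemma excess_add {k : ℕ} (M N : Matrix (Fin k) (Fin k) ℝ) :
    excess (M + N) = excess M + excess N := by
  simp [excess, Finset.sum_add_distrib]

lemma excess_reindex_kronecker (q m : ℕ) (M : Matrix (Fin q) (Fin q) ℝ)
    (N : Matrix (Fin (q ^ m)) (Fin (q ^ m)) ℝ) :
    excess (Matrix.reindex (finPowEquiv q m) (finPowEquiv q m) (M ⊗ₖ N)) =
      excess M * excess N := by
  have h : excess (Matrix.reindex (finPowEquiv q m) (finPowEquiv q m) (M ⊗ₖ N)) =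
      ∑ x : Fin q × Fin (q ^ m), ∑ y : Fin q × Fin (q ^ m), M x.1 y.1 * N x.2 y.2 := by
    unfold excess
    rw [← (finPowEquiv q m).sum_comp]
    refine Finset.sum_congr rfl fun x _ => ?_
    rw [← (finPowEquiv q m).sum_comp]
    simp
  rw [h]
  simp only [excess, Fintype.sum_prod_type, Finset.sum_mul_sum]

lemma excess_one (q : ℕ) : excess (1 : Matrix (Fin q) (Fin q) ℝ) = q := by
  simp [excess, Matrix.one_apply]

lemma excess_Jmat (q : ℕ) : excess (Jmat q) = (q : ℝ) ^ 2 := by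
  simp [excess, Jmat, sq]

lemma excess_eq_zero_of_skew {q : ℕ} {Q : Matrix (Fin q) (Fin q) ℝ} (h : Qᵀ = -Q) :
    excess Q = 0 := by
  have h1 : excess Qᵀ = excess Q := Finset.sum_comm
  have h2 : excess (-Q) = -excess Q := by simp [excess]
  rw [h, h2] at h1
  linarith

lemma excess_Jm_succ (q : ℕ) (Q : Matrix (Fin q) (Fin q) ℝ) (m : ℕ) :
    excess (Jm q Q (m + 1)) = (q : ℝ) ^ 2 * excess (Am q Q m) := by
  rw [← excess_Jmat]
  exact excess_reindex_kronecker q m _ _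

lemma excess_Am_succ {q : ℕ} {Q : Matrix (Fin q) (Fin q) ℝ} (h : Qᵀ = -Q) (m : ℕ) :
    excess (Am q Q (m + 1)) = q * excess (Jm q Q m) := by
  have h1 : Am q Q (m + 1) =
      Matrix.reindex (finPowEquiv q m) (finPowEquiv q m)
        ((1 : Matrix (Fin q) (Fin q) ℝ) ⊗ₖ Jm q Q m) +
      Matrix.reindex (finPowEquiv q m) (finPowEquiv q m) (Q ⊗ₖ Am q Q m) := rfl
  rw [h1, excess_add, excess_reindex_kronecker, excess_reindex_kronecker, excess_one,
    excess_eq_zero_of_skew h, zero_mul, add_zero]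

/-- for a skew symmetric core `Q` of order `q`,
`S(𝒜_{2m+1}) = q^{3m+1}` for every `m ≥ 0`. -/
theorem stmt_13 (q : ℕ) (Q : Matrix (Fin q) (Fin q) ℝ) (hQ : IsSkewCore q Q) (m : ℕ) :
    excess (Am q Q (2 * m + 1)) = (q : ℝ) ^ (3 * m + 1) := by
  have hs := hQ.2.2.1
  induction m with
  | zero =>
    have h0 : excess (Jm q Q 0) = 1 := by
      change ∑ _i : Fin (q ^ 0), ∑ _j : Fin (q ^ 0), (1 : ℝ) = 1
      rw [Finset.sum_const, Finset.sum_const, Finset.card_univ, Fintype.card_fin]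
      norm_num
    rw [mul_zero, excess_Am_succ hs, h0]
    norm_num
  | succ m ih =>
    rw [show 2 * (m + 1) + 1 = (2 * m + 1) + 1 + 1 by ring, excess_Am_succ hs, excess_Jm_succ, ih]
    ring
end
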